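/- Let g ∈ O(V) with p_g invertible, and let S, T : V → V be ℝ-linear with S∘J = −J∘S, T∘J = −J∘T, Sᵗ = −S, Tᵗ = −T. Assume the operators 1 − T̂_g∘S, 1 − T̂_g∘T and 1 − T∘T̂_g are invertible, and set g·S := T_g + (p_gᵗ)⁻¹ ∘ S ∘ (1 − T̂_g∘S)⁻¹ ∘ p_g⁻¹ and g·T := T_g + (p_gᵗ)⁻¹ ∘ T ∘ (1 − T̂_g∘T)⁻¹ ∘ p_g⁻¹. Then p_gᵗ ∘ (1 − (g·T)∘(g·S)) ∘ p_g = (1 − T∘T̂_g)⁻¹ ∘ (1 − T∘S) ∘ (1 − T̂_g∘S)⁻¹. -/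

import Mathlib

open scoped RealInnerProductSpace

/-!
Split `g = p + q` into its parts commuting and anticommuting with `J`, and likewise `g⁻¹ = P + Q`;
for orthogonal `g` and `J` the map `P` is the transpose of `p`. Comparing parts in
`g⁻¹ g = 1 = g g⁻¹` says that the block matrices `!![p, q; q, p]` and `!![P, Q; Q, P]` are mutually
inverse. The operator `g·S` is the Möbius transform of `S` under the first matrix, and it can be
written as a right or as a left fraction:
`g·S = (q + p S) (p + q S)⁻¹ = (P - S Q)⁻¹ (S P - Q)`.
With the left fraction for `g·T` and the right one for `g·S`, the numerator of `1 - (g·T) (g·S)` is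
`(P - T Q) (p + q S) - (T P - Q) (q + p S)`, in which everything cancels except `1 - T S`. Finally
`P - T Q = (1 - T H) P` and `p + q S = p (1 - H S)` for `H = Q P⁻¹`, which is `T̂_g`.
-/

open scoped Ring

lemma isUnit_one_sub_mul_comm {R : Type*} [Ring R] {a b : R} :
    IsUnit (1 - a * b) ↔ IsUnit (1 - b * a) := by
  have h := spectrum.unit_mem_mul_comm (R := ℤ) (a := a) (b := b) (r := 1)
  simpa only [spectrum.mem_iff, Units.val_one, map_one, not_iff_not] using h

section BlockInverse

variable {R : Type*} [Ring R] {p q P Q S T : R}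

/-- The symmetric block matrices `!![p, q; q, p]` and `!![P, Q; Q, P]` are mutually inverse. This is
how the linear and antilinear parts of an invertible operator and of its inverse are related. -/
structure IsBlockInverse (p q P Q : R) : Prop where
  left_diag : P * p + Q * q = 1
  left_offDiag : P * q + Q * p = 0
  right_diag : p * P + q * Q = 1
  right_offDiag : p * Q + q * P = 0

/-- The Möbius transformation `S ↦ g·S` of the block matrix `!![p, q; q, p]` with inverse
`!![P, Q; Q, P]`. Here `q * p⁻¹ʳ` is `T_g` and `Q * P⁻¹ʳ` is `T̂_g`. -/
noncomputable def moebius (p q P Q S : R) : R :=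
  q * p⁻¹ʳ + P⁻¹ʳ * S * (1 - Q * P⁻¹ʳ * S)⁻¹ʳ * p⁻¹ʳ

namespace IsBlockInverse

/-- The inverse of `P` is the Schur complement of `p`. -/
lemma isUnit_diag_inverse (h : IsBlockInverse p q P Q) (hp : IsUnit p) : IsUnit P := by
  refine isUnit_iff_exists.mpr ⟨p - q * p⁻¹ʳ * q, ?_, ?_⟩
  · have hQ : P * q * p⁻¹ʳ = -Q := by
      rw [eq_neg_of_add_eq_zero_left h.left_offDiag, neg_mul, Ring.mul_inverse_cancel_right _ _ hp]
    calc P * (p - q * p⁻¹ʳ * q) = P * p - P * q * p⁻¹ʳ * q := by noncomm_ring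
      _ = 1 := by rw [hQ, neg_mul, sub_neg_eq_add, h.left_diag]
  · have hQ : p⁻¹ʳ * (q * P) = -Q := by
      rw [eq_neg_of_add_eq_zero_right h.right_offDiag, mul_neg, Ring.inverse_mul_cancel_left _ _ hp]
    calc (p - q * p⁻¹ʳ * q) * P = p * P - q * (p⁻¹ʳ * (q * P)) := by noncomm_ring
      _ = 1 := by rw [hQ, mul_neg, sub_neg_eq_add, h.right_diag]

lemma diag_mul_one_sub (h : IsBlockInverse p q P Q) (hP : IsUnit P) :
    p * (1 - Q * P⁻¹ʳ * S) = p + q * S := by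
  have hq : p * Q * P⁻¹ʳ = -q := by
    rw [eq_neg_of_add_eq_zero_left h.right_offDiag, neg_mul, Ring.mul_inverse_cancel_right _ _ hP]
  calc p * (1 - Q * P⁻¹ʳ * S) = p - p * Q * P⁻¹ʳ * S := by noncomm_ring
    _ = p + q * S := by rw [hq, neg_mul, sub_neg_eq_add]

lemma moebius_mul (h : IsBlockInverse p q P Q) (hp : IsUnit p)
    (hS : IsUnit (1 - Q * P⁻¹ʳ * S)) : moebius p q P Q S * (p + q * S) = q + p * S := by
  have hP := h.isUnit_diag_inverse hp
  have hP_inv : P⁻¹ʳ = p + q * Q * P⁻¹ʳ := by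
    rw [← sub_eq_iff_eq_add, ← one_sub_mul, ← eq_sub_of_add_eq h.right_diag,
      Ring.mul_inverse_cancel_right _ _ hP]
  calc moebius p q P Q S * (p + q * S)
    _ = (q + P⁻¹ʳ * S * (1 - Q * P⁻¹ʳ * S)⁻¹ʳ) * (p⁻¹ʳ * (p * (1 - Q * P⁻¹ʳ * S))) := by
      rw [h.diag_mul_one_sub hP, moebius]; noncomm_ring
    _ = q * (1 - Q * P⁻¹ʳ * S) + P⁻¹ʳ * S := by
      rw [Ring.inverse_mul_cancel_left _ _ hp, add_mul, Ring.inverse_mul_cancel_right _ _ hS]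
    _ = q + (P⁻¹ʳ - q * Q * P⁻¹ʳ) * S := by noncomm_ring
    _ = q + p * S := by rw [sub_eq_of_eq_add hP_inv]

lemma mul_moebius (h : IsBlockInverse p q P Q) (hp : IsUnit p)
    (hT : IsUnit (1 - Q * P⁻¹ʳ * T)) : (P - T * Q) * moebius p q P Q T = T * P - Q := by
  have hP := h.isUnit_diag_inverse hp
  have hfactor : (P - T * Q) * P⁻¹ʳ * T = T * (1 - Q * P⁻¹ʳ * T) := by
    rw [sub_mul, Ring.mul_inverse_cancel _ hP]; noncomm_ring
  have hnumer : (P - T * Q) * q + T = (T * P - Q) * p :=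
    calc (P - T * Q) * q + T
      _ = P * q - T * (Q * q) + T * (P * p + Q * q) := by rw [h.left_diag]; noncomm_ring
      _ = (T * P - Q) * p + (P * q + Q * p) := by noncomm_ring
      _ = (T * P - Q) * p := by rw [h.left_offDiag, add_zero]
  calc (P - T * Q) * moebius p q P Q T
    _ = ((P - T * Q) * q + (P - T * Q) * P⁻¹ʳ * T * (1 - Q * P⁻¹ʳ * T)⁻¹ʳ) * p⁻¹ʳ := by
      rw [moebius]; noncomm_ring
    _ = ((P - T * Q) * q + T) * p⁻¹ʳ := by
      rw [hfactor, Ring.mul_inverse_cancel_right _ _ hT]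
    _ = T * P - Q := by rw [hnumer, Ring.mul_inverse_cancel_right _ _ hp]

lemma cross_difference (h : IsBlockInverse p q P Q) :
    (P - T * Q) * (p + q * S) - (T * P - Q) * (q + p * S) = 1 - T * S :=
  calc (P - T * Q) * (p + q * S) - (T * P - Q) * (q + p * S)
    _ = (P * p + Q * q) + (P * q + Q * p) * S - T * (P * q + Q * p)
        - T * (P * p + Q * q) * S := by noncomm_ring
    _ = 1 - T * S := by rw [h.left_diag, h.left_offDiag]; noncomm_ring

theorem mul_one_sub_moebius_mul_moebius_mul (h : IsBlockInverse p q P Q) (hp : IsUnit p)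
    (hS : IsUnit (1 - Q * P⁻¹ʳ * S)) (hT : IsUnit (1 - T * (Q * P⁻¹ʳ))) :
    P * (1 - moebius p q P Q T * moebius p q P Q S) * p =
      (1 - T * (Q * P⁻¹ʳ))⁻¹ʳ * (1 - T * S) * (1 - Q * P⁻¹ʳ * S)⁻¹ʳ := by
  have hP := h.isUnit_diag_inverse hp
  have hdenom : (1 - T * (Q * P⁻¹ʳ)) * P = P - T * Q := by
    rw [one_sub_mul, ← mul_assoc, Ring.inverse_mul_cancel_right _ _ hP]
  rw [Ring.eq_mul_inverse_iff_mul_eq _ _ _ hS, eq_comm, Ring.inverse_mul_eq_iff_eq_mul _ _ _ hT]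
  symm
  calc (1 - T * (Q * P⁻¹ʳ)) * (P * (1 - moebius p q P Q T * moebius p q P Q S) * p *
        (1 - Q * P⁻¹ʳ * S))
    _ = (P - T * Q) * (p + q * S) -
        (P - T * Q) * moebius p q P Q T * (moebius p q P Q S * (p + q * S)) := by
      rw [← hdenom, ← h.diag_mul_one_sub hP]; noncomm_ring
    _ = (P - T * Q) * (p + q * S) - (T * P - Q) * (q + p * S) := by
      rw [h.mul_moebius hp (isUnit_one_sub_mul_comm.mp hT), h.moebius_mul hp hS]
    _ = 1 - T * S := h.cross_difference

end IsBlockInverse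

end BlockInverse

section Parts

variable (𝕜 : Type*) [Field 𝕜] {R : Type*} [Ring R] [Algebra 𝕜 R]

/-- The part of `a` that commutes with `J` when `J * J = -1`; for `a = g` this is `p_g`. -/
def linearPart (J a : R) : R := (2⁻¹ : 𝕜) • (a - J * a * J)

/-- The part of `a` that anticommutes with `J` when `J * J = -1`; for `a = g` this is `q_g`. -/
def antilinearPart (J a : R) : R := (2⁻¹ : 𝕜) • (a + J * a * J)

variable {J : R}

lemma conj_mul_conj_eq_neg (hJ : J * J = -1) (a b : R) :
    (J * a * J) * (J * b * J) = -(J * (a * b) * J) := by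
  calc (J * a * J) * (J * b * J) = J * a * (J * J) * b * J := by noncomm_ring
    _ = -(J * (a * b) * J) := by rw [hJ]; noncomm_ring

lemma linearPart_one [NeZero (2 : 𝕜)] (hJ : J * J = -1) : linearPart 𝕜 J 1 = 1 := by
  rw [linearPart, mul_one, hJ, sub_neg_eq_add, ← two_smul 𝕜, inv_smul_smul₀ two_ne_zero]

lemma antilinearPart_one (hJ : J * J = -1) : antilinearPart 𝕜 J 1 = 0 := by
  rw [antilinearPart, mul_one, hJ, add_neg_cancel, smul_zero]

lemma linearPart_mul [NeZero (2 : 𝕜)] (hJ : J * J = -1) (a b : R) :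
    linearPart 𝕜 J (a * b) =
      linearPart 𝕜 J a * linearPart 𝕜 J b + antilinearPart 𝕜 J a * antilinearPart 𝕜 J b := by
  have hsum : (a - J * a * J) * (b - J * b * J) + (a + J * a * J) * (b + J * b * J) =
      (2 : 𝕜) • (a * b - J * (a * b) * J) := by
    rw [two_smul, sub_eq_add_neg (a * b), ← conj_mul_conj_eq_neg hJ]
    noncomm_ring
  simp only [linearPart, antilinearPart, smul_mul_smul_comm]
  rw [← smul_add, hsum, mul_smul, inv_smul_smul₀ two_ne_zero]

lemma antilinearPart_mul [NeZero (2 : 𝕜)] (hJ : J * J = -1) (a b : R) :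
    antilinearPart 𝕜 J (a * b) =
      linearPart 𝕜 J a * antilinearPart 𝕜 J b + antilinearPart 𝕜 J a * linearPart 𝕜 J b := by
  have hsum : (a - J * a * J) * (b + J * b * J) + (a + J * a * J) * (b - J * b * J) =
      (2 : 𝕜) • (a * b + J * (a * b) * J) := by
    rw [two_smul, ← neg_neg (J * (a * b) * J), ← conj_mul_conj_eq_neg hJ]
    noncomm_ring
  simp only [linearPart, antilinearPart, smul_mul_smul_comm]
  rw [← smul_add, hsum, mul_smul, inv_smul_smul₀ two_ne_zero]

lemma isBlockInverse_parts [NeZero (2 : 𝕜)] (hJ : J * J = -1) {g : R} (hg : IsUnit g) :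
    IsBlockInverse (linearPart 𝕜 J g) (antilinearPart 𝕜 J g)
      (linearPart 𝕜 J g⁻¹ʳ) (antilinearPart 𝕜 J g⁻¹ʳ) where
  left_diag := by
    rw [← linearPart_mul 𝕜 hJ, Ring.inverse_mul_cancel _ hg, linearPart_one 𝕜 hJ]
  left_offDiag := by
    rw [← antilinearPart_mul 𝕜 hJ, Ring.inverse_mul_cancel _ hg, antilinearPart_one 𝕜 hJ]
  right_diag := by
    rw [← linearPart_mul 𝕜 hJ, Ring.mul_inverse_cancel _ hg, linearPart_one 𝕜 hJ]
  right_offDiag := by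
    rw [← antilinearPart_mul 𝕜 hJ, Ring.mul_inverse_cancel _ hg, antilinearPart_one 𝕜 hJ]

lemma star_linearPart [StarRing 𝕜] [StarRing R] [StarModule 𝕜 R] (hJ : star J = -J) (a : R) :
    star (linearPart 𝕜 J a) = linearPart 𝕜 J (star a) := by
  simp only [linearPart, star_smul, star_inv₀, star_ofNat, star_sub, star_mul, hJ, neg_mul,
    mul_neg, neg_neg, mul_assoc]

end Parts

section Adjoint

variable {𝕜 V : Type*} [RCLike 𝕜] [NormedAddCommGroup V] [InnerProductSpace 𝕜 V]
  [FiniteDimensional 𝕜 V] {J g : Module.End 𝕜 V}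

lemma adjoint_eq_neg_of_mul_self_eq_neg_one (hJ : J * J = -1)
    (hJ_inner : ∀ u v : V, inner 𝕜 (J u) (J v) = inner 𝕜 u v) : LinearMap.adjoint J = -J := by
  refine ((LinearMap.eq_adjoint_iff (-J) J).mpr fun u v => ?_).symm
  have hJJv : J (J v) = -v := LinearMap.congr_fun hJ v
  rw [← hJ_inner u, hJJv, inner_neg_right, LinearMap.neg_apply, inner_neg_left]

lemma isUnit_of_adjoint_mul_self (hg : LinearMap.adjoint g * g = 1) : IsUnit g :=
  .of_mul_eq_one_right _ hg

lemma ring_inverse_eq_adjoint (hg : LinearMap.adjoint g * g = 1) :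
    g⁻¹ʳ = LinearMap.adjoint g := by
  rw [← one_mul g⁻¹ʳ, ← hg, Ring.mul_inverse_cancel_right _ _ (isUnit_of_adjoint_mul_self hg)]

lemma adjoint_linearPart (hJ : J * J = -1)
    (hJ_inner : ∀ u v : V, inner 𝕜 (J u) (J v) = inner 𝕜 u v)
    (hg : LinearMap.adjoint g * g = 1) :
    LinearMap.adjoint (linearPart 𝕜 J g) = linearPart 𝕜 J g⁻¹ʳ := by
  rw [ring_inverse_eq_adjoint hg]
  exact star_linearPart 𝕜 (adjoint_eq_neg_of_mul_self_eq_neg_one hJ hJ_inner) g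

end Adjoint

theorem stmt_11_general {𝕜 R : Type*} [Field 𝕜] [NeZero (2 : 𝕜)] [Ring R] [Algebra 𝕜 R]
    {J g : R} (hJ : J * J = -1) (hg : IsUnit g) {p q P Q Tg Tghat : R}
    (hp : p = linearPart 𝕜 J g) (hq : q = antilinearPart 𝕜 J g) (hp_unit : IsUnit p)
    (hP : P = linearPart 𝕜 J g⁻¹ʳ) (hQ : Q = antilinearPart 𝕜 J g⁻¹ʳ)
    (hTg : Tg = q * p⁻¹ʳ) (hTghat : Tghat = Q * P⁻¹ʳ) {S T gS gT : R}
    (hS : IsUnit (1 - Tghat * S)) (hT : IsUnit (1 - T * Tghat))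
    (hgS : gS = Tg + P⁻¹ʳ * S * (1 - Tghat * S)⁻¹ʳ * p⁻¹ʳ)
    (hgT : gT = Tg + P⁻¹ʳ * T * (1 - Tghat * T)⁻¹ʳ * p⁻¹ʳ) :
    P * (1 - gT * gS) * p = (1 - T * Tghat)⁻¹ʳ * (1 - T * S) * (1 - Tghat * S)⁻¹ʳ := by
  have hblock : IsBlockInverse p q P Q := by
    subst hp hq hP hQ
    exact isBlockInverse_parts 𝕜 hJ hg
  subst hTg hTghat hgS hgT
  exact hblock.mul_one_sub_moebius_mul_moebius_mul hp_unit hS hT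

/-- Let `g ∈ O(V)` with `p_g` invertible, and let `S, T : V → V` be
ℝ-linear with `S∘J = −J∘S`, `T∘J = −J∘T`, `Sᵗ = −S`, `Tᵗ = −T`. Assume the operators
`1 − T̂_g∘S`, `1 − T̂_g∘T` and `1 − T∘T̂_g` are invertible, and set
`g·S := T_g + (p_gᵗ)⁻¹ ∘ S ∘ (1 − T̂_g∘S)⁻¹ ∘ p_g⁻¹` and
`g·T := T_g + (p_gᵗ)⁻¹ ∘ T ∘ (1 − T̂_g∘T)⁻¹ ∘ p_g⁻¹`. Then
`p_gᵗ ∘ (1 − (g·T)∘(g·S)) ∘ p_g = (1 − T∘T̂_g)⁻¹ ∘ (1 − T∘S) ∘ (1 − T̂_g∘S)⁻¹`. -/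
theorem stmt_11 {V : Type*} [NormedAddCommGroup V] [InnerProductSpace ℝ V]
    [FiniteDimensional ℝ V] (m : ℕ) (hdim : Module.finrank ℝ V = 2 * m)
    (J : Module.End ℝ V) (hJ2 : J * J = -1)
    (hJd : ∀ u v : V, ⟪J u, J v⟫ = ⟪u, v⟫)
    (g : Module.End ℝ V) (hgo : LinearMap.adjoint g * g = 1)
    (pg qg pg' qg' Tg Tghat : Module.End ℝ V)
    (hpg : pg = (2⁻¹ : ℝ) • (g - J * g * J))
    (hqg : qg = (2⁻¹ : ℝ) • (g + J * g * J))
    (hpgu : IsUnit pg)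
    (hpg' : pg' = (2⁻¹ : ℝ) • (Ring.inverse g - J * Ring.inverse g * J))
    (hqg' : qg' = (2⁻¹ : ℝ) • (Ring.inverse g + J * Ring.inverse g * J))
    (hTg : Tg = qg * Ring.inverse pg)
    (hThat : Tghat = qg' * Ring.inverse pg')
    (S T : Module.End ℝ V)
    (hSJ : S * J = -(J * S)) (hTJ : T * J = -(J * T))
    (hSsk : LinearMap.adjoint S = -S) (hTsk : LinearMap.adjoint T = -T)
    (hu1 : IsUnit (1 - Tghat * S)) (hu2 : IsUnit (1 - Tghat * T))
    (hu3 : IsUnit (1 - T * Tghat))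
    (gS gT : Module.End ℝ V)
    (hgS : gS = Tg + Ring.inverse (LinearMap.adjoint pg) * S *
      Ring.inverse (1 - Tghat * S) * Ring.inverse pg)
    (hgT : gT = Tg + Ring.inverse (LinearMap.adjoint pg) * T *
      Ring.inverse (1 - Tghat * T) * Ring.inverse pg) :
    LinearMap.adjoint pg * (1 - gT * gS) * pg =
      Ring.inverse (1 - T * Tghat) * (1 - T * S) * Ring.inverse (1 - Tghat * S) := by
  have hpg_adj : LinearMap.adjoint pg = pg' := hpg ▸ hpg' ▸ adjoint_linearPart hJ2 hJd hgo
  rw [hpg_adj] at hgS hgT ⊢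
  exact stmt_11_general hJ2 (isUnit_of_adjoint_mul_self hgo) hpg hqg hpgu hpg' hqg' hTg hThat
    hu1 hu3 hgS hgT
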